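/- arXiv:2305.14636 — 2 statements merged into one kernel-verified Lean document; each statement's English description precedes it below -/
import Mathlib

section
/- Let D ≥ 3 and n ≥ 2 be integers, and let H(D,n) be the Hamming graph whose vertices are the functions from Fin D to Fin n, two vertices being adjacent iff they differ in exactly one coordinate (so the graph distance equals Hamming distance). Then the distance matrix 𝔻 of H(D,n), whose (x,y)-entry is the graph distance d(x,y), has exactly three distinct eigenvalues, one of which is 0. -/
/-- The Hamming graph `H(D,n)`: vertices are functions `Fin D → Fin n`, adjacent iff they
differ in exactly one coordinate. -/
def hammingGraph (D n : ℕ) : SimpleGraph (Fin D → Fin n) where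
  Adj x y := (Finset.univ.filter fun i => x i ≠ y i).card = 1
  symm := by
    constructor
    intro x y h
    simpa [ne_comm] using h
  loopless := by
    constructor
    intro x h
    simp at h

/-- `θ` is an eigenvalue of the real matrix `M`. -/
def IsEigenval {n : Type*} [Fintype n] (M : Matrix n n ℝ) (θ : ℝ) : Prop :=
  ∃ v : n → ℝ, v ≠ 0 ∧ M.mulVec v = θ • v

/-!
Write `𝔻` for the distance matrix, `J` for the all-ones matrix and `q = n ^ (D - 1)`. Since `𝔻` is
a sum over coordinates of the indicators of `x i ≠ y i`, counting vertices by the values of one or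
two coordinates gives `𝔻 ^ 2 + q 𝔻 ∈ ℝ J` and constant row sums `a = D (n - 1) q`. Hence `a` is the
eigenvalue of the constants, and on vectors of sum zero `𝔻 (𝔻 + q) = 0`. Both `0` and `-q` are
attained there: for any such vector `v`, the vectors `𝔻 v + q v` and `𝔻 v` are eigenvectors for
`0` and `-q` as soon as they do not vanish, and for the difference of the indicators of two adjacent
vertices neither does.
-/

open Finset Function Matrix

section HammingDist

variable {ι : Type*} {β : ι → Type*} [Fintype ι] [∀ i, DecidableEq (β i)] [DecidableEq ι]
  {x y : ∀ i, β i} {i : ι}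

lemma hammingDist_update_add_one (h : x i ≠ y i) :
    hammingDist (update x i (y i)) y + 1 = hammingDist x y := by
  have herase : ({j | update x i (y i) j ≠ y j} : Finset ι) =
      ({j | x j ≠ y j} : Finset ι).erase i := by
    ext j
    obtain rfl | hj := eq_or_ne j i <;> simp [*]
  simp only [hammingDist, herase]
  exact card_erase_add_one (by simpa using h)

lemma hammingDist_update_self {b : β i} (h : x i ≠ b) : hammingDist x (update x i b) = 1 := by
  rw [← hammingDist_update_add_one (i := i) (by simpa using h)]
  simp

end HammingDist

section GraphDistance

variable {D n : ℕ} {x y : Fin D → Fin n}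

lemma hammingGraph_adj_iff : (hammingGraph D n).Adj x y ↔ hammingDist x y = 1 := Iff.rfl

lemma hammingDist_le_length (p : (hammingGraph D n).Walk x y) : hammingDist x y ≤ p.length := by
  induction p with
  | nil => simp
  | @cons u v w h p ih =>
    rw [hammingGraph_adj_iff] at h
    calc hammingDist u w ≤ hammingDist u v + hammingDist v w := hammingDist_triangle u v w
      _ ≤ p.length + 1 := by lia

lemma exists_walk_length_eq_hammingDist (x y : Fin D → Fin n) :
    ∃ p : (hammingGraph D n).Walk x y, p.length = hammingDist x y := by
  induction hk : hammingDist x y generalizing x with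
  | zero =>
    obtain rfl := hammingDist_eq_zero.1 hk
    exact ⟨.nil, rfl⟩
  | succ k ih =>
    obtain ⟨i, hi⟩ : ∃ i, x i ≠ y i := ne_iff.1 (hammingDist_pos.1 (by lia))
    have hcloser := hammingDist_update_add_one hi
    obtain ⟨p, hp⟩ := ih (update x i (y i)) (by lia)
    exact ⟨.cons (hammingGraph_adj_iff.2 (hammingDist_update_self hi)) p, by simp [hp]⟩

lemma hammingGraph_dist_eq_hammingDist (x y : Fin D → Fin n) :
    (hammingGraph D n).dist x y = hammingDist x y := by
  obtain ⟨p, hp⟩ := exists_walk_length_eq_hammingDist x y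
  obtain ⟨q, hq⟩ := p.reachable.exists_walk_length_eq_dist
  exact le_antisymm (hp ▸ SimpleGraph.dist_le p) (hq ▸ hammingDist_le_length q)

end GraphDistance

section Spectrum

variable {V : Type*} [Fintype V] {M : Matrix V V ℝ} {a q c η : ℝ} {v : V → ℝ}

lemma mulVec_mulVec_add_smul (hM : M * M + q • M = c • vecMulVec 1 1) (v : V → ℝ) :
    M *ᵥ M *ᵥ v + q • M *ᵥ v = (c * ∑ x, v x) • 1 := by
  rw [mulVec_mulVec, ← smul_mulVec, ← add_mulVec, hM, smul_mulVec, vecMulVec_mulVec,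
    one_dotProduct, op_smul_eq_smul, smul_smul]

lemma isEigenval_neg_of_mulVec_ne_zero (hM : M * M + q • M = c • vecMulVec 1 1)
    (hv : ∑ x, v x = 0) (hMv : M *ᵥ v ≠ 0) : IsEigenval M (-q) := by
  have h := mulVec_mulVec_add_smul hM v
  rw [hv, mul_zero, zero_smul] at h
  exact ⟨M *ᵥ v, hMv, by rw [neg_smul]; exact eq_neg_of_add_eq_zero_left h⟩

lemma isEigenval_zero_of_mulVec_add_smul_ne_zero (hM : M * M + q • M = c • vecMulVec 1 1)
    (hv : ∑ x, v x = 0) (hMv : M *ᵥ v + q • v ≠ 0) : IsEigenval M 0 := by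
  have h := mulVec_mulVec_add_smul hM v
  rw [hv, mul_zero, zero_smul] at h
  exact ⟨M *ᵥ v + q • v, hMv, by rw [mulVec_add, mulVec_smul, h, zero_smul]⟩

lemma isEigenval_of_mulVec_one [Nonempty V] (ha : M *ᵥ 1 = a • 1) : IsEigenval M a :=
  ⟨1, one_ne_zero, ha⟩

lemma sum_eq_zero_of_mulVec_eq_smul (hsymm : M.IsSymm) (ha : M *ᵥ 1 = a • 1)
    (hv : M *ᵥ v = η • v) (hη : η ≠ a) : ∑ x, v x = 0 := by
  have h : η * ∑ x, v x = a * ∑ x, v x :=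
    calc η * ∑ x, v x = 1 ⬝ᵥ M *ᵥ v := by rw [hv, dotProduct_smul, one_dotProduct, smul_eq_mul]
      _ = M *ᵥ 1 ⬝ᵥ v := by rw [dotProduct_mulVec, ← mulVec_transpose, hsymm.eq]
      _ = a * ∑ x, v x := by rw [ha, smul_dotProduct, one_dotProduct, smul_eq_mul]
  by_contra hsum
  exact hη (mul_right_cancel₀ hsum h)

lemma IsEigenval.eq_or_eq_neg_or_eq_zero (hsymm : M.IsSymm) (ha : M *ᵥ 1 = a • 1)
    (hM : M * M + q • M = c • vecMulVec 1 1) (hη : IsEigenval M η) :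
    η = a ∨ η = -q ∨ η = 0 := by
  obtain ⟨v, hv0, hv⟩ := hη
  refine or_iff_not_imp_left.2 fun hηa => ?_
  have hquad : (η * (η + q)) • v = 0 :=
    calc (η * (η + q)) • v = M *ᵥ M *ᵥ v + q • M *ᵥ v := by
          rw [hv, mulVec_smul, hv]
          module
      _ = 0 := by
          rw [mulVec_mulVec_add_smul hM, sum_eq_zero_of_mulVec_eq_smul hsymm ha hv hηa,
            mul_zero, zero_smul]
  rcases mul_eq_zero.1 ((smul_eq_zero.1 hquad).resolve_right hv0) with h | h
  · exact Or.inr h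
  · exact Or.inl (eq_neg_of_add_eq_zero_left h)

lemma setOf_isEigenval_eq (hsymm : M.IsSymm) (ha : M *ᵥ 1 = a • 1)
    (hM : M * M + q • M = c • vecMulVec 1 1) (hv : ∑ x, v x = 0) {z : V} (hvz : v z = 0)
    (hMvz : (M *ᵥ v) z ≠ 0) : {η | IsEigenval M η} = {a, -q, 0} := by
  have : Nonempty V := ⟨z⟩
  refine Set.Subset.antisymm (fun η hη => hη.eq_or_eq_neg_or_eq_zero hsymm ha hM) ?_
  rintro η (rfl | rfl | rfl)
  · exact isEigenval_of_mulVec_one ha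
  · exact isEigenval_neg_of_mulVec_ne_zero hM hv fun h => hMvz (by simp [h])
  · refine isEigenval_zero_of_mulVec_add_smul_ne_zero hM hv fun h => hMvz ?_
    simpa [hvz] using congrFun h z

end Spectrum

section CoordinateSums

variable {ι α : Type*} [Fintype ι] [DecidableEq ι] [Fintype α]

lemma sum_comp_eval {R : Type*} [AddCommMonoid R] (f : α → R) (i : ι) :
    ∑ z : ι → α, f (z i) = Fintype.card α ^ (Fintype.card ι - 1) • ∑ b, f b := by
  simpa using Fintype.sum_piFinset_apply f univ i

lemma sum_comp_eval_mul_comp_eval {R : Type*} [NonUnitalNonAssocSemiring R] (f g : α → R)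
    {i j : ι} (hij : i ≠ j) :
    ∑ z : ι → α, f (z i) * g (z j) =
      Fintype.card α ^ (Fintype.card ι - 2) • ((∑ b, f b) * ∑ b, g b) := by
  calc ∑ z : ι → α, f (z i) * g (z j)
      = ∑ b, ∑ w : {k // k ≠ i} → α, f b * g (w ⟨j, hij.symm⟩) := by
        rw [← (Equiv.funSplitAt i α).symm.sum_comp, Fintype.sum_prod_type]
        simp [hij.symm]
    _ = _ := by
        simp only [← mul_sum, sum_comp_eval, ← sum_mul]
        simp [Nat.sub_sub, mul_smul_comm]

variable [DecidableEq α] {R : Type*}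

lemma sum_ite_ne [Ring R] (b : α) :
    ∑ c, (if b ≠ c then (1 : R) else 0) = Fintype.card α - 1 := by
  rw [sum_boole, filter_ne, cast_card_erase_of_mem (mem_univ b), card_univ]

lemma sum_ite_ne_mul_ite_ne [Ring R] (b b' : α) :
    ∑ c, (if b ≠ c then (1 : R) else 0) * (if c ≠ b' then 1 else 0) =
      Fintype.card α - 1 - if b ≠ b' then 1 else 0 := by
  have hsplit (c : α) : (if b ≠ c then (1 : R) else 0) * (if c ≠ b' then 1 else 0) =
      (if b ≠ c then 1 else 0) - if c = b' then (if b ≠ b' then 1 else 0) else 0 := by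
    by_cases hc : c = b' <;> simp [hc]
  simp only [hsplit, sum_sub_distrib, sum_ite_ne, sum_ite_eq', mem_univ, if_true]

end CoordinateSums

section DistanceMatrix

/-- The matrix of Hamming distances between words `ι → α`, with entries cast to `R`: the distance
matrix `𝔻` of the Hamming graph. -/
def hammingDistMatrix (ι α R : Type*) [Fintype ι] [DecidableEq α] [NatCast R] :
    Matrix (ι → α) (ι → α) R :=
  Matrix.of fun x y => (hammingDist x y : R)

variable {ι α R : Type*} [Fintype ι] [DecidableEq α]

lemma hammingDistMatrix_apply [NatCast R] (x y : ι → α) :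
    hammingDistMatrix ι α R x y = hammingDist x y := rfl

lemma hammingDistMatrix_isSymm [NatCast R] : (hammingDistMatrix ι α R).IsSymm :=
  Matrix.IsSymm.ext fun x y => by simp only [hammingDistMatrix_apply, hammingDist_comm]

lemma hammingDistMatrix_apply_eq_sum [NonAssocSemiring R] (x y : ι → α) :
    hammingDistMatrix ι α R x y = ∑ i, if x i ≠ y i then 1 else 0 := by
  rw [hammingDistMatrix_apply, hammingDist, natCast_card_filter]

variable [DecidableEq ι] [Fintype α]

lemma hammingDistMatrix_mulVec_one [CommRing R] :
    hammingDistMatrix ι α R *ᵥ 1 =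
      (Fintype.card ι * (Fintype.card α - 1) * Fintype.card α ^ (Fintype.card ι - 1) : R) • 1 := by
  ext x
  have hcoord (i : ι) : ∑ y : ι → α, (if x i ≠ y i then (1 : R) else 0) =
      (Fintype.card α - 1) * Fintype.card α ^ (Fintype.card ι - 1) := by
    rw [sum_comp_eval (fun b => if x i ≠ b then (1 : R) else 0) i, sum_ite_ne]
    simp [mul_comm]
  simp only [mulVec, dotProduct_one, hammingDistMatrix_apply_eq_sum]
  rw [sum_comm]
  simp only [hcoord, sum_const, card_univ, nsmul_eq_mul, Pi.smul_apply, Pi.one_apply, smul_eq_mul]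
  ring

lemma sum_ite_ne_mul_hammingDistMatrix [CommRing R] (x y : ι → α) (i : ι) :
    ∑ z : ι → α, (if x i ≠ z i then (1 : R) else 0) * hammingDistMatrix ι α R z y =
      Fintype.card α ^ (Fintype.card ι - 1) *
          (Fintype.card α - 1 - if x i ≠ y i then 1 else 0) +
        (Fintype.card ι - 1) *
          (Fintype.card α ^ (Fintype.card ι - 2) * (Fintype.card α - 1) ^ 2) := by
  have hdiag : ∑ z : ι → α, (if x i ≠ z i then (1 : R) else 0) * (if z i ≠ y i then 1 else 0) =
      Fintype.card α ^ (Fintype.card ι - 1) *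
        (Fintype.card α - 1 - if x i ≠ y i then 1 else 0) := by
    rw [sum_comp_eval (fun b => (if x i ≠ b then (1 : R) else 0) * if b ≠ y i then 1 else 0) i,
      sum_ite_ne_mul_ite_ne]
    simp
  have hoff (j : ι) (hj : j ∈ univ.erase i) :
      ∑ z : ι → α, (if x i ≠ z i then (1 : R) else 0) * (if z j ≠ y j then 1 else 0) =
        Fintype.card α ^ (Fintype.card ι - 2) * (Fintype.card α - 1) ^ 2 := by
    simp only [ne_comm (b := y j)]
    rw [sum_comp_eval_mul_comp_eval (fun b => if x i ≠ b then (1 : R) else 0)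
      (fun b => if y j ≠ b then 1 else 0) (ne_of_mem_erase hj).symm, sum_ite_ne, sum_ite_ne]
    simp [sq]
  simp only [hammingDistMatrix_apply_eq_sum, mul_sum]
  rw [sum_comm, ← add_sum_erase _ _ (mem_univ i), hdiag, sum_congr rfl hoff, sum_const,
    nsmul_eq_mul, cast_card_erase_of_mem (mem_univ i), card_univ]

lemma hammingDistMatrix_mul_self_add_smul [CommRing R] :
    hammingDistMatrix ι α R * hammingDistMatrix ι α R +
        (Fintype.card α ^ (Fintype.card ι - 1) : R) • hammingDistMatrix ι α R =
      (Fintype.card ι * (Fintype.card α ^ (Fintype.card ι - 1) * (Fintype.card α - 1) +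
        (Fintype.card ι - 1) *
          (Fintype.card α ^ (Fintype.card ι - 2) * (Fintype.card α - 1) ^ 2)) : R) •
        vecMulVec 1 1 := by
  ext x y
  have hmul : (hammingDistMatrix ι α R * hammingDistMatrix ι α R) x y =
      ∑ i, ∑ z : ι → α, (if x i ≠ z i then (1 : R) else 0) * hammingDistMatrix ι α R z y := by
    rw [mul_apply, sum_comm]
    simp only [hammingDistMatrix_apply_eq_sum x, sum_mul]
  simp only [Matrix.add_apply, Matrix.smul_apply, smul_eq_mul, hmul,
    sum_ite_ne_mul_hammingDistMatrix, sum_add_distrib, ← mul_sum, sum_sub_distrib,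
    ← hammingDistMatrix_apply_eq_sum, sum_const, card_univ, nsmul_eq_mul, vecMulVec_apply,
    Pi.one_apply]
  ring

lemma setOf_isEigenval_hammingDistMatrix [Nontrivial ι] [Nontrivial α] :
    {η | IsEigenval (hammingDistMatrix ι α ℝ) η} =
      {Fintype.card ι * (Fintype.card α - 1) * (Fintype.card α : ℝ) ^ (Fintype.card ι - 1),
        -(Fintype.card α : ℝ) ^ (Fintype.card ι - 1), 0} := by
  -- The vertex `z` is at distance `card ι` from `x`, and one closer to the neighbour `y` of `x`.
  obtain ⟨i, j, hij⟩ := exists_pair_ne ι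
  obtain ⟨b, c, hbc⟩ := exists_pair_ne α
  let x : ι → α := fun _ => b
  let z : ι → α := fun _ => c
  let y : ι → α := update x i c
  have hzx : z ≠ x := ne_iff.2 ⟨i, hbc.symm⟩
  have hzy : z ≠ y := ne_iff.2 ⟨j, by simpa [x, y, z, hij.symm] using hbc.symm⟩
  have hdist : hammingDist y z + 1 = hammingDist x z :=
    hammingDist_update_add_one (x := x) (y := z) (i := i) hbc
  refine setOf_isEigenval_eq (v := Pi.single x 1 - Pi.single y 1) (z := z)
    hammingDistMatrix_isSymm hammingDistMatrix_mulVec_one hammingDistMatrix_mul_self_add_smul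
    (by simp) (by simp [hzx, hzy]) ?_
  have hone : (hammingDistMatrix ι α ℝ *ᵥ (Pi.single x 1 - Pi.single y 1)) z = 1 := by
    simp [mulVec_sub, hammingDistMatrix_apply, hammingDist_comm z, ← hdist]
  rw [hone]
  exact one_ne_zero

end DistanceMatrix

lemma of_hammingGraph_dist_eq (D n : ℕ) :
    (Matrix.of fun x y : Fin D → Fin n => ((hammingGraph D n).dist x y : ℝ)) =
      hammingDistMatrix (Fin D) (Fin n) ℝ := by
  simp only [hammingGraph_dist_eq_hammingDist, hammingDistMatrix]

theorem stmt9_general (D n : ℕ) (hD : 2 ≤ D) (hn : 2 ≤ n) :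
    ∃ a b : ℝ, a ≠ b ∧ a ≠ 0 ∧ b ≠ 0 ∧
      {η : ℝ | IsEigenval
        (Matrix.of fun x y : Fin D → Fin n => ((hammingGraph D n).dist x y : ℝ)) η}
        = {a, b, 0} := by
  have : Nontrivial (Fin D) := Fin.nontrivial_iff_two_le.2 hD
  have : Nontrivial (Fin n) := Fin.nontrivial_iff_two_le.2 hn
  have hD_pos : (0 : ℝ) < D := by exact_mod_cast (by lia : 0 < D)
  have hn_pos : (0 : ℝ) < n - 1 := sub_pos.2 (by exact_mod_cast hn)
  have hb : 0 < (n : ℝ) ^ (D - 1) := by positivity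
  have ha : 0 < D * (n - 1) * (n : ℝ) ^ (D - 1) := mul_pos (mul_pos hD_pos hn_pos) hb
  refine ⟨D * (n - 1) * (n : ℝ) ^ (D - 1), -(n : ℝ) ^ (D - 1), by linarith, ha.ne',
    neg_ne_zero.2 hb.ne', ?_⟩
  simpa [of_hammingGraph_dist_eq] using
    setOf_isEigenval_hammingDistMatrix (ι := Fin D) (α := Fin n)

/-- For `D ≥ 3` and `n ≥ 2`, the distance matrix of the Hamming graph `H(D,n)` has
exactly three distinct eigenvalues, one of which is `0`. -/
theorem stmt9 (D n : ℕ) (hD : 3 ≤ D) (hn : 2 ≤ n) :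
    ∃ a b : ℝ, a ≠ b ∧ a ≠ 0 ∧ b ≠ 0 ∧
      {η : ℝ | IsEigenval
        (Matrix.of fun x y : Fin D → Fin n => ((hammingGraph D n).dist x y : ℝ)) η}
        = {a, b, 0} :=
  stmt9_general D n (by lia) hn
end

section
/- Let n and t be integers with n ≥ 2t and t ≥ 3, and let J(n,t) be the Johnson graph whose vertices are the t-element subsets of an n-element set, two subsets A, B being adjacent iff |A ∩ B| = t − 1. Then the distance matrix 𝔻 of J(n,t), whose (A,B)-entry is the graph distance d(A,B), has exactly three distinct eigenvalues, one of which is 0. -/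
/-!
Let `N` be the incidence matrix of points against `t`-subsets. Since `d(A, B) = t - |A ∩ B|`, the
distance matrix is `D = t J - Nᵀ N`, where `J` is the all-ones matrix. The `t`-subsets form a
2-design, so `N Nᵀ = (r - l) I + l J`, where `r` and `l` count the blocks through one and through
two points. Hence `D` multiplies the constants by `t (b - r)`, where `b` is the number of blocks,
acts as `-(r - l)` on the vectors `Nᵀ u` with `∑ u = 0`, and annihilates `ker N`, which is nonzero
because there are more blocks than points. Conversely, summing the coordinates of `D v = η v` gives
`η = t (b - r)` unless `∑ v = 0`, and then applying `N` gives `η = -(r - l)` unless `N v = 0`.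
-/

/-- The Johnson graph `J(n,t)`: vertices are the `t`-element subsets of an `n`-element
set, two distinct subsets being adjacent iff their intersection has `t - 1` elements. -/
def johnsonGraph (n t : ℕ) : SimpleGraph {A : Finset (Fin n) // A.card = t} where
  Adj A B := A ≠ B ∧ (A.1 ∩ B.1).card = t - 1
  symm := by
    refine ⟨?_⟩
    intro A B h
    exact ⟨h.1.symm, by rw [Finset.inter_comm]; exact h.2⟩
  loopless := by
    refine ⟨?_⟩
    intro A h
    exact h.1 rfl

open Finset Matrix

section GraphDistance

variable {V : Type*} {G : SimpleGraph V} {b : V} {f : V → ℕ}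

lemma le_length_of_forall_adj_le (hb : f b = 0) (hle : ∀ u v, G.Adj u v → f u ≤ f v + 1)
    {u : V} (p : G.Walk u b) : f u ≤ p.length := by
  induction p with
  | nil => exact hb.le
  | cons h p ih => exact (hle _ _ h).trans (Nat.succ_le_succ (ih hb))

lemma exists_walk_length_eq_of_forall_ne
    (hdesc : ∀ u, u ≠ b → ∃ v, G.Adj u v ∧ f u = f v + 1) (hb : f b = 0) (u : V) :
    ∃ p : G.Walk u b, p.length = f u := by
  induction hk : f u generalizing u with
  | zero =>
    obtain rfl : u = b := by
      by_contra hu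
      obtain ⟨v, -, hv⟩ := hdesc u hu
      omega
    exact ⟨.nil, rfl⟩
  | succ k ih =>
    obtain ⟨v, huv, hv⟩ := hdesc u (by rintro rfl; omega)
    obtain ⟨p, hp⟩ := ih v (by omega)
    exact ⟨.cons huv p, by rw [SimpleGraph.Walk.length_cons, hp]⟩

lemma dist_eq_of_forall_adj_le_of_forall_ne (hb : f b = 0)
    (hle : ∀ u v, G.Adj u v → f u ≤ f v + 1)
    (hdesc : ∀ u, u ≠ b → ∃ v, G.Adj u v ∧ f u = f v + 1) (u : V) : G.dist u b = f u := by
  obtain ⟨p, hp⟩ := exists_walk_length_eq_of_forall_ne hdesc hb u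
  obtain ⟨q, hq⟩ := p.reachable.exists_walk_length_eq_dist
  exact le_antisymm (hp ▸ SimpleGraph.dist_le p) (hq ▸ le_length_of_forall_adj_le hb hle q)

end GraphDistance

namespace johnsonGraph

variable {n t : ℕ} {A B : {A : Finset (Fin n) // A.card = t}}

lemma adj_iff_card_sdiff_eq_one : (johnsonGraph n t).Adj A B ↔ #(A.1 \ B.1) = 1 := by
  have hcard : #(A.1 \ B.1) + #(A.1 ∩ B.1) = t := by rw [card_sdiff_add_card_inter, A.2]
  constructor
  · rintro ⟨hne, hinter⟩
    have hpos : #(A.1 \ B.1) ≠ 0 := fun h =>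
      hne (Subtype.ext (eq_of_subset_of_card_le (sdiff_eq_empty_iff_subset.1 (card_eq_zero.1 h))
        (by rw [A.2, B.2])))
    omega
  · intro h
    refine ⟨?_, by omega⟩
    rintro rfl
    simp at h

lemma card_sdiff_le_of_adj (C : Finset (Fin n)) (h : (johnsonGraph n t).Adj A B) :
    #(A.1 \ C) ≤ #(B.1 \ C) + 1 :=
  calc #(A.1 \ C) ≤ #(A.1 \ B.1 ∪ B.1 \ C) := card_le_card (sdiff_triangle _ _ _)
    _ ≤ #(A.1 \ B.1) + #(B.1 \ C) := card_union_le _ _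
    _ = #(B.1 \ C) + 1 := by rw [adj_iff_card_sdiff_eq_one.1 h, add_comm]

lemma exists_adj_card_sdiff_eq (hAB : A ≠ B) :
    ∃ C, (johnsonGraph n t).Adj A C ∧ #(A.1 \ B.1) = #(C.1 \ B.1) + 1 := by
  have hcard : #A.1 = #B.1 := A.2.trans B.2.symm
  obtain ⟨x, hx⟩ : (A.1 \ B.1).Nonempty := sdiff_nonempty.2 fun h =>
    hAB (Subtype.ext (eq_of_subset_of_card_le h hcard.ge))
  obtain ⟨y, hy⟩ : (B.1 \ A.1).Nonempty := sdiff_nonempty.2 fun h =>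
    hAB (Subtype.ext (eq_of_subset_of_card_le h hcard.le).symm)
  rw [mem_sdiff] at hx hy
  have hy' : y ∉ A.1.erase x := fun h => hy.2 (mem_of_mem_erase h)
  refine ⟨⟨insert y (A.1.erase x), ?_⟩, adj_iff_card_sdiff_eq_one.2 ?_, ?_⟩
  · rw [card_insert_of_notMem hy', card_erase_add_one hx.1, A.2]
  · rw [sdiff_insert_of_notMem hy.2, sdiff_erase hx.1, Finset.sdiff_self, insert_empty_eq,
      card_singleton]
  · rw [insert_sdiff_of_mem _ hy.1, erase_sdiff_comm, card_erase_add_one (mem_sdiff.2 hx)]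

lemma dist_eq_card_sdiff (A B : {A : Finset (Fin n) // A.card = t}) :
    (johnsonGraph n t).dist A B = #(A.1 \ B.1) :=
  dist_eq_of_forall_adj_le_of_forall_ne (f := fun A => #(A.1 \ B.1)) (by simp)
    (fun _ _ => card_sdiff_le_of_adj B.1) (fun _ => exists_adj_card_sdiff_eq) A

end johnsonGraph

section Design

variable {P B : Type*} [Fintype P] [Fintype B]

/-- The matrix `k J - Nᵀ N`, where `J` is the all-ones matrix. For the point-block incidence matrix
`N` of a family of `k`-sets, its `(A, B)`-entry is `k - |A ∩ B|`. -/
def blockDistMatrix (N : Matrix P B ℝ) (k : ℝ) : Matrix B B ℝ :=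
  k • vecMulVec 1 1 - Nᵀ * N

/-- The linear identities satisfied by the point-block incidence matrix `N` of a 2-design with
blocks of size `k`, in which every point lies in `r` blocks and any two distinct points lie in `l`
common blocks. The entries of `N` are not required to be `0` or `1`. -/
structure IsDesignMatrix [DecidableEq P] (N : Matrix P B ℝ) (k r l : ℝ) : Prop where
  one_vecMul : 1 ᵥ* N = k • 1
  mulVec_one : N *ᵥ 1 = r • 1
  mul_transpose : N * Nᵀ = (r - l) • 1 + l • vecMulVec 1 1

lemma blockDistMatrix_mulVec (N : Matrix P B ℝ) (k : ℝ) (v : B → ℝ) :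
    blockDistMatrix N k *ᵥ v = (k * (1 ⬝ᵥ v)) • 1 - Nᵀ *ᵥ (N *ᵥ v) := by
  simp only [blockDistMatrix, sub_mulVec, smul_mulVec, vecMulVec_mulVec, op_smul_eq_smul, smul_smul,
    mulVec_mulVec]

namespace IsDesignMatrix

variable [DecidableEq P] {N : Matrix P B ℝ} {k r l : ℝ}

lemma one_dotProduct_mulVec (hN : IsDesignMatrix N k r l) (v : B → ℝ) :
    1 ⬝ᵥ (N *ᵥ v) = k * (1 ⬝ᵥ v) := by
  rw [dotProduct_mulVec, hN.one_vecMul, smul_dotProduct, smul_eq_mul]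

lemma one_dotProduct_transpose_mulVec (hN : IsDesignMatrix N k r l) (u : P → ℝ) :
    1 ⬝ᵥ (Nᵀ *ᵥ u) = r * (1 ⬝ᵥ u) := by
  rw [dotProduct_mulVec, vecMul_transpose, hN.mulVec_one, smul_dotProduct, smul_eq_mul]

lemma mulVec_transpose_mulVec (hN : IsDesignMatrix N k r l) {u : P → ℝ} (hu : 1 ⬝ᵥ u = 0) :
    N *ᵥ (Nᵀ *ᵥ u) = (r - l) • u := by
  simp only [mulVec_mulVec, hN.mul_transpose, add_mulVec, smul_mulVec, one_mulVec,
    vecMulVec_mulVec, hu, op_smul_eq_smul, zero_smul, smul_zero, add_zero]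

lemma blockDistMatrix_mulVec_one (hN : IsDesignMatrix N k r l) :
    blockDistMatrix N k *ᵥ 1 = (k * (Fintype.card B - r)) • 1 := by
  rw [blockDistMatrix_mulVec, one_dotProduct_one, hN.mulVec_one, mulVec_smul, mulVec_transpose,
    hN.one_vecMul, smul_smul, ← sub_smul, mul_sub, mul_comm r]

lemma one_dotProduct_blockDistMatrix_mulVec (hN : IsDesignMatrix N k r l) (v : B → ℝ) :
    1 ⬝ᵥ (blockDistMatrix N k *ᵥ v) = k * (Fintype.card B - r) * (1 ⬝ᵥ v) := by
  rw [blockDistMatrix_mulVec, dotProduct_sub, dotProduct_smul, one_dotProduct_one,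
    hN.one_dotProduct_transpose_mulVec, hN.one_dotProduct_mulVec, smul_eq_mul]
  ring

lemma mulVec_blockDistMatrix_mulVec (hN : IsDesignMatrix N k r l) {v : B → ℝ} (hv : 1 ⬝ᵥ v = 0) :
    N *ᵥ (blockDistMatrix N k *ᵥ v) = -(r - l) • (N *ᵥ v) := by
  have hNv : 1 ⬝ᵥ (N *ᵥ v) = 0 := by rw [hN.one_dotProduct_mulVec, hv, mul_zero]
  rw [blockDistMatrix_mulVec, hv, mul_zero, zero_smul, zero_sub, mulVec_neg,
    hN.mulVec_transpose_mulVec hNv, neg_smul]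

lemma blockDistMatrix_mulVec_transpose_mulVec (hN : IsDesignMatrix N k r l) {u : P → ℝ}
    (hu : 1 ⬝ᵥ u = 0) : blockDistMatrix N k *ᵥ (Nᵀ *ᵥ u) = -(r - l) • (Nᵀ *ᵥ u) := by
  rw [blockDistMatrix_mulVec, hN.one_dotProduct_transpose_mulVec, hu, hN.mulVec_transpose_mulVec hu,
    mulVec_smul, mul_zero, mul_zero, zero_smul, zero_sub, neg_smul]

lemma blockDistMatrix_mulVec_eq_zero (hN : IsDesignMatrix N k r l) {v : B → ℝ} (hv : N *ᵥ v = 0) :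
    blockDistMatrix N k *ᵥ v = 0 := by
  rw [blockDistMatrix_mulVec, ← hN.one_dotProduct_mulVec, hv, dotProduct_zero, zero_smul,
    mulVec_zero, sub_zero]

lemma isEigenval_mul_card_sub [Nonempty B] (hN : IsDesignMatrix N k r l) :
    IsEigenval (blockDistMatrix N k) (k * (Fintype.card B - r)) :=
  ⟨1, one_ne_zero, hN.blockDistMatrix_mulVec_one⟩

lemma isEigenval_neg_sub [Nontrivial P] (hN : IsDesignMatrix N k r l) (hrl : r - l ≠ 0) :
    IsEigenval (blockDistMatrix N k) (-(r - l)) := by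
  obtain ⟨x, y, hxy⟩ := exists_pair_ne P
  let u : P → ℝ := Pi.single x 1 - Pi.single y 1
  have hu : 1 ⬝ᵥ u = 0 := by simp [u]
  have hu0 : u ≠ 0 := Function.ne_iff.2 ⟨x, by simp [u, hxy]⟩
  refine ⟨Nᵀ *ᵥ u, fun h => ?_, hN.blockDistMatrix_mulVec_transpose_mulVec hu⟩
  have hzero : (r - l) • u = 0 := by rw [← hN.mulVec_transpose_mulVec hu, h, mulVec_zero]
  exact (smul_ne_zero hrl hu0) hzero

lemma isEigenval_zero (hN : IsDesignMatrix N k r l) (hcard : Fintype.card P < Fintype.card B) :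
    IsEigenval (blockDistMatrix N k) 0 := by
  have hker : LinearMap.ker N.mulVecLin ≠ ⊥ :=
    LinearMap.ker_ne_bot_of_finrank_lt (by simpa using hcard)
  obtain ⟨v, hv, hv0⟩ := Submodule.exists_mem_ne_zero_of_ne_bot hker
  exact ⟨v, hv0, by rw [hN.blockDistMatrix_mulVec_eq_zero hv, zero_smul]⟩

lemma eq_or_eq_or_eq_zero_of_isEigenval (hN : IsDesignMatrix N k r l) {η : ℝ}
    (h : IsEigenval (blockDistMatrix N k) η) :
    η = k * (Fintype.card B - r) ∨ η = -(r - l) ∨ η = 0 := by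
  obtain ⟨v, hv, hη⟩ := h
  by_cases hsum : 1 ⬝ᵥ v = 0
  · by_cases hNv : N *ᵥ v = 0
    · have hηv : η • v = 0 := by rw [← hη, hN.blockDistMatrix_mulVec_eq_zero hNv]
      exact .inr (.inr ((smul_eq_zero.1 hηv).resolve_right hv))
    · have hηNv : η • (N *ᵥ v) = -(r - l) • (N *ᵥ v) := by
        rw [← mulVec_smul, ← hη, hN.mulVec_blockDistMatrix_mulVec hsum]
      exact .inr (.inl (smul_left_injective ℝ hNv hηNv))
  · have hηsum : η * (1 ⬝ᵥ v) = k * (Fintype.card B - r) * (1 ⬝ᵥ v) := by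
      rw [← hN.one_dotProduct_blockDistMatrix_mulVec, hη, dotProduct_smul, smul_eq_mul]
    exact .inl (mul_right_cancel₀ hsum hηsum)

theorem setOf_isEigenval_blockDistMatrix [Nontrivial P] (hN : IsDesignMatrix N k r l)
    (hrl : r - l ≠ 0) (hcard : Fintype.card P < Fintype.card B) :
    {η | IsEigenval (blockDistMatrix N k) η} = {k * (Fintype.card B - r), -(r - l), 0} := by
  have : Nonempty B := Fintype.card_pos_iff.1 (Nat.zero_lt_of_lt hcard)
  refine Set.Subset.antisymm (fun η => hN.eq_or_eq_or_eq_zero_of_isEigenval) ?_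
  rintro _ (rfl | rfl | rfl)
  exacts [hN.isEigenval_mul_card_sub, hN.isEigenval_neg_sub hrl, hN.isEigenval_zero hcard]

end IsDesignMatrix

end Design

section InclusionMatrix

variable {α : Type*} [Fintype α] [DecidableEq α] {t : ℕ}

variable (α t) in
/-- The inclusion matrix `W_{1,t}` of points of `α` against `t`-subsets of `α`. -/
def inclusionMatrix : Matrix α {A : Finset α // A.card = t} ℝ :=
  of fun x A => if x ∈ A.1 then 1 else 0

lemma card_filter_subset_subtype_card_eq {S : Finset α} (hS : #S ≤ t) :
    #{A : {A : Finset α // A.card = t} | S ⊆ A.1}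
      = (Fintype.card α - #S).choose (t - #S) := by
  rw [← card_univ, ← card_filter_powersetCard_subset S univ t (subset_univ S) hS,
    ← card_map (.subtype _)]
  congr 1
  ext A
  simp [and_comm]

lemma inclusionMatrix_mul_transpose_apply (x y : α) (ht : #{x, y} ≤ t) :
    (inclusionMatrix α t * (inclusionMatrix α t)ᵀ) x y
      = (Fintype.card α - #{x, y}).choose (t - #{x, y}) := by
  rw [← card_filter_subset_subtype_card_eq ht]
  simp only [mul_apply, transpose_apply, inclusionMatrix, of_apply, ite_zero_mul_ite_zero, mul_one,
    sum_boole, insert_subset_iff, singleton_subset_iff]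

lemma inclusionMatrix_transpose_mul_apply (A B : {A : Finset α // A.card = t}) :
    ((inclusionMatrix α t)ᵀ * inclusionMatrix α t) A B = #(A.1 ∩ B.1) := by
  simp only [mul_apply, transpose_apply, inclusionMatrix, of_apply, ite_zero_mul_ite_zero, mul_one,
    sum_boole, ← mem_inter, filter_univ_mem]

theorem isDesignMatrix_inclusionMatrix (ht : 2 ≤ t) :
    IsDesignMatrix (inclusionMatrix α t) t ((Fintype.card α - 1).choose (t - 1))
      ((Fintype.card α - 2).choose (t - 2)) where
  one_vecMul := by
    ext A
    simp [vecMul, inclusionMatrix, one_dotProduct, A.2]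
  mulVec_one := by
    ext x
    have h := card_filter_subset_subtype_card_eq (S := {x}) (t := t) (by rw [card_singleton]; omega)
    simp only [singleton_subset_iff, card_singleton] at h
    simp [mulVec, inclusionMatrix, dotProduct_one, h]
  mul_transpose := by
    ext x y
    rw [inclusionMatrix_mul_transpose_apply x y (card_le_two.trans ht)]
    rcases eq_or_ne x y with rfl | hxy
    · simp
    · simp [hxy, card_pair hxy]

end InclusionMatrix

lemma lt_choose_of_two_le_of_add_two_le {n t : ℕ} (ht : 2 ≤ t) (hn : t + 2 ≤ n) :
    n < n.choose t := by
  induction n generalizing t with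
  | zero => omega
  | succ n ih =>
    obtain ⟨s, rfl⟩ := Nat.exists_eq_add_of_le' (Nat.one_le_of_lt ht)
    rw [Nat.choose_succ_succ']
    have hs : 0 < n.choose s := Nat.choose_pos (by omega)
    have hs' : 0 < n.choose (s + 1) := Nat.choose_pos (by omega)
    rcases (show s + 3 ≤ n ∨ n = s + 2 by omega) with h | rfl
    · have := ih ht h
      omega
    · rcases (show s = 1 ∨ 2 ≤ s by omega) with rfl | h
      · decide
      · have := ih h le_rfl
        omega

lemma of_dist_johnsonGraph_eq_blockDistMatrix (n t : ℕ) :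
    (of fun A B => ((johnsonGraph n t).dist A B : ℝ))
      = blockDistMatrix (inclusionMatrix (Fin n) t) t := by
  ext A B
  have h : (#(A.1 \ B.1) + #(A.1 ∩ B.1) : ℝ) = t := by
    exact_mod_cast (card_sdiff_add_card_inter A.1 B.1).trans A.2
  simp [blockDistMatrix, inclusionMatrix_transpose_mul_apply, johnsonGraph.dist_eq_card_sdiff, ← h]

theorem setOf_isEigenval_dist_johnsonGraph {n t : ℕ} (ht : 2 ≤ t) (hn : t + 2 ≤ n) :
    {η : ℝ | IsEigenval (of fun A B => ((johnsonGraph n t).dist A B : ℝ)) η}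
      = {(t * (n - 1).choose t : ℝ), (-(n - 2).choose (t - 1) : ℝ), 0} := by
  have : Nontrivial (Fin n) := Fin.nontrivial_iff_two_le.2 (by omega)
  have hblocks : Fintype.card {A : Finset (Fin n) // A.card = t} = n.choose t := by simp
  have hb : (n.choose t - (n - 1).choose (t - 1) : ℝ) = (n - 1).choose t := by
    rw [Nat.choose_eq_choose_pred_add (by omega) (by omega), Nat.cast_add, add_sub_cancel_left]
  have hr : ((n - 1).choose (t - 1) - (n - 2).choose (t - 2) : ℝ) = (n - 2).choose (t - 1) := by
    rw [Nat.choose_eq_choose_pred_add (by omega) (by omega), Nat.cast_add]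
    exact add_sub_cancel_left _ _
  have hpos : 0 < (n - 2).choose (t - 1) := Nat.choose_pos (by omega)
  have hdesign := isDesignMatrix_inclusionMatrix (α := Fin n) ht
  rw [Fintype.card_fin] at hdesign
  rw [of_dist_johnsonGraph_eq_blockDistMatrix, hdesign.setOf_isEigenval_blockDistMatrix,
    hblocks, hb, hr]
  · rw [hr]
    exact_mod_cast hpos.ne'
  · rw [hblocks, Fintype.card_fin]
    exact lt_choose_of_two_le_of_add_two_le ht hn

theorem stmt10_general (n t : ℕ) (ht : 2 ≤ t) (hn : t + 2 ≤ n) :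
    ∃ a b : ℝ, a ≠ b ∧ a ≠ 0 ∧ b ≠ 0 ∧
      {η : ℝ | IsEigenval
        (Matrix.of fun A B : {A : Finset (Fin n) // A.card = t} =>
          ((johnsonGraph n t).dist A B : ℝ)) η}
        = {a, b, 0} := by
  have hchoose : 0 < (n - 1).choose t := Nat.choose_pos (by omega)
  have ha : (0 : ℝ) < t * (n - 1).choose t := by positivity
  have hb : (0 : ℝ) < (n - 2).choose (t - 1) := by exact_mod_cast Nat.choose_pos (by omega)
  exact ⟨_, _, by linarith, ha.ne', neg_ne_zero.2 hb.ne', setOf_isEigenval_dist_johnsonGraph ht hn⟩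

/-- For `n ≥ 2t` and `t ≥ 3`, the distance matrix of the Johnson graph `J(n,t)` has
exactly three distinct eigenvalues, one of which is `0`. -/
theorem stmt10 (n t : ℕ) (ht : 3 ≤ t) (hn : 2 * t ≤ n) :
    ∃ a b : ℝ, a ≠ b ∧ a ≠ 0 ∧ b ≠ 0 ∧
      {η : ℝ | IsEigenval
        (Matrix.of fun A B : {A : Finset (Fin n) // A.card = t} =>
          ((johnsonGraph n t).dist A B : ℝ)) η}
        = {a, b, 0} :=
  stmt10_general n t (by omega) (by omega)
end
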